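/- arXiv:2110.00390 — 2 statements merged into one kernel-verified Lean document; each statement's English description precedes it below -/
import Mathlib

section
/- Let (λ_j)_{j=1}^∞ and (a_j)_{j=1}^∞ be sequences of real numbers such that |λ₁| > 0 and |λ_j| ≤ |λ_{j+1}| for all j, and suppose there exist constants c₁, c₂, c₃, c₄ > 0 such that |λ_j| ≥ c₁ j^{c₂} and |a_j| ≤ c₃ j^{c₄} for all j. Then for every a' > 0, the function s ↦ Σ_{j=1}^∞ sgn(λ_j) a_j · e^{−λ_j² s} e^{−a'²/s} s^{−1/2} · ( a'/s − |λ_j| ) is integrable on (0,∞), and ∫_0^∞ Σ_{j=1}^∞ sgn(λ_j) a_j · e^{−λ_j² s} e^{−a'²/s} s^{−1/2} · ( a'/s − |λ_j| ) ds = 0. -/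
open MeasureTheory Set

open Filter Topology in
/-- Each individual term integrates to zero. -/
lemma term_integral_zero (L a : ℝ) (hL : 0 < L) (ha : 0 < a)
    (hint : IntegrableOn (fun s : ℝ => (Real.exp (-L ^ 2 * s) * Real.exp (-a ^ 2 / s) / Real.sqrt s) *
        (a / s - L)) (Ioi 0) volume) :
    ∫ s in Ioi (0:ℝ), (Real.exp (-L ^ 2 * s) * Real.exp (-a ^ 2 / s) / Real.sqrt s) *
        (a / s - L) = 0 := by
  set G : ℝ → ℝ := fun v => ∫ t in (0:ℝ)..v, Real.exp (-1 * t ^ 2) with hG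
  set m : ℝ := ∫ t in Ioi (0:ℝ), Real.exp (-1 * t ^ 2) with hm
  have hGlim : Tendsto G atTop (𝓝 m) :=
    intervalIntegral_tendsto_integral_Ioi 0 (integrable_exp_neg_mul_sq one_pos).integrableOn
      tendsto_id
  have hGd : ∀ v, HasDerivAt G (Real.exp (-1 * v ^ 2)) v := by
    intro v
    have hc : Continuous fun t : ℝ => Real.exp (-1 * t ^ 2) := by fun_prop
    exact (hc.integral_hasStrictDerivAt 0 v).hasDerivAt
  set w : ℝ → ℝ := fun s => L * Real.sqrt s + a / Real.sqrt s with hw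
  set F : ℝ → ℝ := fun s => -2 * Real.exp (2 * a * L) * G (w s) with hF
  have hw_top : Tendsto w atTop atTop := by
    refine tendsto_atTop_mono (f := fun s => L * Real.sqrt s) ?_
      (Real.tendsto_sqrt_atTop.const_mul_atTop hL)
    intro s
    have : 0 ≤ a / Real.sqrt s := by positivity
    simp only [hw]; linarith
  have hw_zero : Tendsto w (𝓝[>] 0) atTop := by
    refine tendsto_atTop_mono (f := fun s => a * (Real.sqrt s)⁻¹) ?_ ?_
    · intro s
      have : 0 ≤ L * Real.sqrt s := by positivity
      simp only [hw, div_eq_mul_inv]; linarith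
    · refine Tendsto.const_mul_atTop ha (tendsto_inv_nhdsGT_zero.comp ?_)
      refine tendsto_nhdsWithin_iff.2 ⟨?_, ?_⟩
      · have := (Real.continuous_sqrt.tendsto 0)
        rw [Real.sqrt_zero] at this
        exact this.mono_left nhdsWithin_le_nhds
      · filter_upwards [self_mem_nhdsWithin] with s hs
        exact Real.sqrt_pos.2 hs
  have hF_top : Tendsto F atTop (𝓝 (-2 * Real.exp (2 * a * L) * m)) :=
    (hGlim.comp hw_top).const_mul _
  have hF_zero : Tendsto F (𝓝[>] 0) (𝓝 (-2 * Real.exp (2 * a * L) * m)) :=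
    (hGlim.comp hw_zero).const_mul _
  have hder : ∀ s ∈ Ioi (0:ℝ), HasDerivAt F ((Real.exp (-L ^ 2 * s) * Real.exp (-a ^ 2 / s) /
      Real.sqrt s) * (a / s - L)) s := by
    intro s hs
    have hs : 0 < s := hs
    have hr : 0 < Real.sqrt s := Real.sqrt_pos.2 hs
    have hd := Real.hasDerivAt_sqrt hs.ne'
    have hwd := (hd.const_mul L).add ((hd.inv hr.ne').const_mul a)
    have hwd' : HasDerivAt w _ s := hwd
    have h2 := ((hGd (w s)).comp s hwd').const_mul (-2 * Real.exp (2 * a * L))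
    refine h2.congr_deriv ?_
    have he : Real.exp (-L ^ 2 * s) * Real.exp (-a ^ 2 / s)
        = Real.exp (2 * a * L) * Real.exp (-1 * (w s) ^ 2) := by
      rw [← Real.exp_add, ← Real.exp_add]
      congr 1
      simp only [hw]
      have hss : Real.sqrt s ^ 2 = s := Real.sq_sqrt hs.le
      generalize Real.sqrt s = r at *
      subst hss
      field_simp
      ring
    rw [he]
    have hss : Real.sqrt s ^ 2 = s := Real.sq_sqrt hs.le
    generalize Real.exp (-1 * (w s) ^ 2) = E
    generalize Real.exp (2 * a * L) = E'
    generalize Real.sqrt s = r at *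
    subst hss
    field_simp
    ring
  have key := integral_Ioi_of_hasDerivAt_of_tendsto
    (f := Function.update F 0 (-2 * Real.exp (2 * a * L) * m)) (a := 0)
    (m := -2 * Real.exp (2 * a * L) * m) ?_ ?_ hint ?_
  · rw [key]; simp
  · rw [continuousWithinAt_update_same, Ici_sdiff_left]
    exact hF_zero
  · intro s hs
    refine (hder s hs).congr_of_eventuallyEq ?_
    filter_upwards [lt_mem_nhds hs] with x hx
    rw [Function.update_of_ne hx.ne']
  · refine hF_top.congr' ?_
    filter_upwards [eventually_gt_atTop 0] with x hx
    rw [Function.update_of_ne hx.ne']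

lemma one_add_sq_le_exp (c t : ℝ) (hc : 0 < c) (ht : 0 ≤ t) :
    (1 + t) ^ 2 ≤ (2 + 4 / c ^ 2) * Real.exp (c * t) := by
  have h1 : 1 ≤ Real.exp (c * t) := Real.one_le_exp (by positivity)
  have h2 : 1 + c * t + (c * t) ^ 2 / 2 ≤ Real.exp (c * t) :=
    Real.quadratic_le_exp_of_nonneg (by positivity)
  have h3 : t ^ 2 ≤ 2 / c ^ 2 * Real.exp (c * t) := by
    rw [div_mul_eq_mul_div, le_div_iff₀ (by positivity)]
    have : 0 ≤ c * t := by positivity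
    nlinarith
  have h4 : 4 / c ^ 2 = 2 * (2 / c ^ 2) := by ring
  rw [h4]
  nlinarith [sq_nonneg (1 - t)]

/-- Uniform pointwise bound. -/
lemma term_bound (L L0 a s : ℝ) (hL0 : 0 < L0) (hL : L0 ≤ L) (ha : 0 < a) (hs : 0 < s) :
    |(Real.exp (-L ^ 2 * s) * Real.exp (-a ^ 2 / s) / Real.sqrt s) * (a / s - L)| ≤
      (2 + 4 / (a / 2) ^ 2) * Real.exp (-(a / 2) * L) *
      ((1 + a) * (2 + 4 / (a ^ 2 / 2) ^ 2) * Real.exp (-(L0 ^ 2 / 2) * s)) := by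
  have hLp : 0 < L := hL0.trans_le hL
  have hr : 0 < Real.sqrt s := Real.sqrt_pos.2 hs
  have h1 : |a / s - L| ≤ (1 + L) * ((1 + a) * (1 + 1 / s)) := by
    have hd : 0 < 1 / s := by positivity
    have : a / s = a * (1 / s) := by ring
    rw [this]
    generalize 1 / s = t at *
    rw [abs_le]
    have p1 : 0 < a * t := by positivity
    have p2 : 0 < L * a := by positivity
    have p3 : 0 < L * t := by positivity
    have p4 : 0 < L * a * t := by positivity
    constructor <;> nlinarith
  have h2 : 1 / Real.sqrt s ≤ 1 + 1 / s := by
    have hss : Real.sqrt s ^ 2 = s := Real.sq_sqrt hs.le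
    have : 1 / s = (1 / Real.sqrt s) ^ 2 := by rw [div_pow, hss]; simp
    rw [this]
    nlinarith [sq_nonneg (1 / Real.sqrt s - 1), sq_nonneg (1 / Real.sqrt s)]
  have h3 : Real.exp (-L ^ 2 * s) * Real.exp (-a ^ 2 / s) ≤
      Real.exp (-a * L) * (Real.exp (-(L0 ^ 2 / 2) * s) * Real.exp (-(a ^ 2 / 2 * (1 / s)))) := by
    rw [← Real.exp_add, ← Real.exp_add, ← Real.exp_add]
    apply Real.exp_le_exp.2
    have q1 : L0 ^ 2 * s ≤ L ^ 2 * s := by gcongr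
    have q2 : 0 ≤ (L * s - a) ^ 2 / s := by positivity
    have q3 : (L * s - a) ^ 2 / s = L ^ 2 * s - 2 * a * L + a ^ 2 / s := by
      field_simp
      ring
    have q4 : -a ^ 2 / s = - (a ^ 2 / s) := by ring
    have q5 : a ^ 2 / 2 * (1 / s) = (a ^ 2 / s) / 2 := by ring
    rw [q4, q5]
    nlinarith
  have h4 := one_add_sq_le_exp (a ^ 2 / 2) (1 / s) (by positivity) (by positivity)
  have h5 : 1 + L ≤ (2 + 4 / (a / 2) ^ 2) * Real.exp (a / 2 * L) :=
    le_trans (by nlinarith) (one_add_sq_le_exp (a / 2) L (by positivity) hLp.le)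
  rw [abs_mul, abs_of_nonneg (by positivity : 0 ≤ Real.exp (-L ^ 2 * s) * Real.exp (-a ^ 2 / s) / Real.sqrt s),
    div_eq_mul_one_div]
  calc _ ≤ (Real.exp (-a * L) * (Real.exp (-(L0 ^ 2 / 2) * s) * Real.exp (-(a ^ 2 / 2 * (1 / s))))) *
        (1 + 1 / s) * ((1 + L) * ((1 + a) * (1 + 1 / s))) := by gcongr
    _ = (Real.exp (-a * L) * (1 + L)) * ((1 + a) * (Real.exp (-(a ^ 2 / 2 * (1 / s))) *
        (1 + 1 / s) ^ 2) * Real.exp (-(L0 ^ 2 / 2) * s)) := by ring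
    _ ≤ (Real.exp (-a * L) * ((2 + 4 / (a / 2) ^ 2) * Real.exp (a / 2 * L))) *
        ((1 + a) * (Real.exp (-(a ^ 2 / 2 * (1 / s))) *
        ((2 + 4 / (a ^ 2 / 2) ^ 2) * Real.exp (a ^ 2 / 2 * (1 / s)))) *
          Real.exp (-(L0 ^ 2 / 2) * s)) := by gcongr
    _ = _ := by
      have e1 : Real.exp (-(a / 2) * L) = Real.exp (-a * L) * Real.exp (a / 2 * L) := by
        rw [← Real.exp_add]; congr 1; ring
      have e2 : Real.exp (-(a ^ 2 / 2 * (1 / s))) * Real.exp (a ^ 2 / 2 * (1 / s)) = 1 := by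
        rw [← Real.exp_add]; simp
      rw [e1]
      linear_combination (Real.exp (-a * L) * ((2 + 4 / (a / 2) ^ 2) * Real.exp (a / 2 * L))) *
        (1 + a) * (2 + 4 / (a ^ 2 / 2) ^ 2) * Real.exp (-(L0 ^ 2 / 2) * s) * e2

open Filter Topology Asymptotics in
lemma summable_weights (k c₂ c₄ : ℝ) (hk : 0 < k) (hc₂ : 0 < c₂) :
    Summable fun j : ℕ => ((j : ℝ) + 1) ^ c₄ * Real.exp (-k * ((j : ℝ) + 1) ^ c₂) := by
  have hs : Summable fun j : ℕ => ((j : ℝ) + 1) ^ (-2 : ℝ) := by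
    have := (summable_nat_add_iff 1).2 (Real.summable_nat_rpow.2 (by norm_num : (-2 : ℝ) < -1))
    simpa using this
  refine summable_of_isBigO_nat hs ?_
  have ht : Tendsto (fun j : ℕ => ((j : ℝ) + 1) ^ c₂) atTop atTop :=
    (tendsto_rpow_atTop hc₂).comp
      (tendsto_atTop_add_const_right _ 1 tendsto_natCast_atTop_atTop)
  have h := ((isLittleO_exp_neg_mul_rpow_atTop hk ((-2 - c₄) / c₂)).comp_tendsto ht).isBigO
  have h2 := (isBigO_refl (fun j : ℕ => ((j : ℝ) + 1) ^ c₄) atTop).mul h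
  refine h2.congr_right ?_
  intro j
  have hj : (0:ℝ) < (j : ℝ) + 1 := by positivity
  simp only [Function.comp]
  rw [← Real.rpow_mul hj.le, ← Real.rpow_add hj]
  congr 1
  field_simp
  ring

/-- Termwise integration under a product domination. -/
lemma tsum_integral_zero (f : ℕ → ℝ → ℝ) (b : ℕ → ℝ) (g : ℝ → ℝ)
    (hmeas : ∀ j, Measurable (f j)) (hb : Summable b)
    (hg : IntegrableOn g (Ioi 0) volume)
    (hfb : ∀ j, ∀ s ∈ Ioi (0:ℝ), |f j s| ≤ b j * g s)
    (hz : ∀ j, IntegrableOn (f j) (Ioi 0) volume → ∫ s in Ioi (0:ℝ), f j s = 0) :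
    IntegrableOn (fun s => ∑' j, f j s) (Ioi 0) volume ∧
      ∫ s in Ioi (0:ℝ), ∑' j, f j s = 0 := by
  have hint : ∀ j, IntegrableOn (f j) (Ioi 0) volume := by
    intro j
    refine Integrable.mono' (hg.const_mul (b j)) (hmeas j).aestronglyMeasurable ?_
    filter_upwards [ae_restrict_mem measurableSet_Ioi] with s hs
    exact hfb j s hs
  have hsum : ∀ s ∈ Ioi (0:ℝ), Summable fun j => f j s := fun s hs =>
    Summable.of_norm_bounded (hb.mul_right (g s)) (fun j => hfb j s hs)
  constructor
  · refine Integrable.mono' (hg.const_mul (∑' j, b j)) ?_ ?_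
    · refine aestronglyMeasurable_of_tendsto_ae Filter.atTop
        (f := fun (n : ℕ) s => ∑ j ∈ Finset.range n, f j s) ?_ ?_
      · intro n
        exact (Finset.measurable_sum _ fun j _ => hmeas j).aestronglyMeasurable
      · filter_upwards [ae_restrict_mem measurableSet_Ioi] with s hs
        exact (hsum s hs).hasSum.tendsto_sum_nat
    · filter_upwards [ae_restrict_mem measurableSet_Ioi] with s hs
      exact tsum_of_norm_bounded (hb.hasSum.mul_right (g s)) (fun j => hfb j s hs)
  · have hn : Summable fun j => ∫ s in Ioi (0:ℝ), ‖f j s‖ := by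
      refine Summable.of_nonneg_of_le (fun j => integral_nonneg fun s => norm_nonneg _) (fun j => ?_)
        (hb.mul_right (∫ s in Ioi (0:ℝ), g s))
      rw [← integral_const_mul]
      exact setIntegral_mono_on (hint j).norm (hg.const_mul (b j)) measurableSet_Ioi (hfb j)
    have := hasSum_integral_of_summable_integral_norm hint hn
    rw [← this.tsum_eq]
    simp [fun j => hz j (hint j)]

/-- vanishing of the boundary-term integral (Proposition 5.1 of [HW21a]).
The sequences are indexed so that `lam j`, `A j` correspond to `λ_{j+1}`, `a_{j+1}`. -/
theorem stmt4 (lam A : ℕ → ℝ)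
    (h0 : 0 < |lam 0|)
    (hmono : ∀ j, |lam j| ≤ |lam (j + 1)|)
    (c₁ c₂ c₃ c₄ : ℝ) (hc₁ : 0 < c₁) (hc₂ : 0 < c₂) (hc₃ : 0 < c₃) (hc₄ : 0 < c₄)
    (hgrowth : ∀ j : ℕ, c₁ * ((j : ℝ) + 1) ^ c₂ ≤ |lam j|)
    (hbound : ∀ j : ℕ, |A j| ≤ c₃ * ((j : ℝ) + 1) ^ c₄)
    (a' : ℝ) (ha' : 0 < a') :
    IntegrableOn
      (fun s : ℝ => ∑' j : ℕ, Real.sign (lam j) * A j *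
        (Real.exp (-(lam j) ^ 2 * s) * Real.exp (-a' ^ 2 / s) / Real.sqrt s) *
        (a' / s - |lam j|)) (Ioi 0) volume ∧
    ∫ s in Ioi (0:ℝ), ∑' j : ℕ, Real.sign (lam j) * A j *
        (Real.exp (-(lam j) ^ 2 * s) * Real.exp (-a' ^ 2 / s) / Real.sqrt s) *
        (a' / s - |lam j|) = 0 := by
  have hLmono : ∀ j, |lam 0| ≤ |lam j| := fun j =>
    (monotone_nat_of_le_succ (f := fun j => |lam j|) hmono) (Nat.zero_le j)
  set K : ℝ := 2 + 4 / (a' / 2) ^ 2 with hK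
  have hKp : 0 < K := by positivity
  refine tsum_integral_zero _
    (fun j => c₃ * K * (((j : ℝ) + 1) ^ c₄ * Real.exp (-(a' / 2 * c₁) * ((j : ℝ) + 1) ^ c₂)))
    (fun s => (1 + a') * (2 + 4 / (a' ^ 2 / 2) ^ 2) * Real.exp (-(|lam 0| ^ 2 / 2) * s))
    ?_ ?_ ?_ ?_ ?_
  · intro j
    fun_prop
  · exact (summable_weights _ c₂ c₄ (by positivity) hc₂).mul_left _
  · exact (exp_neg_integrableOn_Ioi 0 (by positivity)).const_mul _
  · intro j s hs
    have hb := term_bound |lam j| |lam 0| a' s h0 (hLmono j) ha' hs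
    rw [sq_abs (lam j)] at hb
    have hsg : |Real.sign (lam j)| ≤ 1 := by
      rcases Real.sign_apply_eq (lam j) with h | h | h <;> simp [h]
    rw [mul_assoc, abs_mul, abs_mul]
    calc _ ≤ 1 * (c₃ * ((j : ℝ) + 1) ^ c₄) * (K * Real.exp (-(a' / 2) * |lam j|) *
          ((1 + a') * (2 + 4 / (a' ^ 2 / 2) ^ 2) * Real.exp (-(|lam 0| ^ 2 / 2) * s))) := by
          gcongr
          exact hbound j
      _ ≤ 1 * (c₃ * ((j : ℝ) + 1) ^ c₄) * (K * Real.exp (-(a' / 2 * c₁) * ((j : ℝ) + 1) ^ c₂) *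
          ((1 + a') * (2 + 4 / (a' ^ 2 / 2) ^ 2) * Real.exp (-(|lam 0| ^ 2 / 2) * s))) := by
          gcongr 1 * (c₃ * ((j : ℝ) + 1) ^ c₄) * (K * ?_ * _)
          apply Real.exp_le_exp.2
          have := mul_le_mul_of_nonneg_left (hgrowth j) (by positivity : 0 ≤ a' / 2)
          linarith
      _ = _ := by ring
  · intro j _
    have hLp : 0 < |lam j| := h0.trans_le (hLmono j)
    have hz := term_integral_zero |lam j| a' hLp ha' ?_
    · simp_rw [sq_abs] at hz
      simp_rw [mul_assoc (Real.sign (lam j) * A j)]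
      rw [integral_const_mul, hz, mul_zero]
    · refine Integrable.mono' ((exp_neg_integrableOn_Ioi 0
        (by positivity : 0 < |lam 0| ^ 2 / 2)).const_mul ((1 + a') * (2 + 4 / (a' ^ 2 / 2) ^ 2))
          |>.const_mul (K * Real.exp (-(a' / 2) * |lam j|)))
        (by fun_prop) ?_
      filter_upwards [ae_restrict_mem measurableSet_Ioi] with s hs
      exact term_bound |lam j| |lam 0| a' s h0 (hLmono j) ha' hs
end

section
/- For all s > 0, all a > 0, and all λ ∈ ℝ, one has 4 ∫_0^∞ e^{−s(μ² + λ²)} sin(μa) ( μ cos(μa) + |λ| sin(μa) ) dμ = √π · e^{−sλ²} · ( a s^{−3/2} e^{−a²/s} + |λ| s^{−1/2} (1 − e^{−a²/s}) ). -/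
open MeasureTheory Set

lemma aux_int_cos (s : ℝ) (hs : 0 < s) (t : ℝ) :
    Integrable (fun x : ℝ => Real.exp (-s * x ^ 2) * Real.cos (t * x)) := by
  refine (integrable_exp_neg_mul_sq hs).mono' (by fun_prop) (Filter.Eventually.of_forall fun x => ?_)
  rw [norm_mul, Real.norm_eq_abs, Real.norm_eq_abs, Real.abs_exp]
  exact mul_le_of_le_one_right (Real.exp_pos _).le (Real.abs_cos_le_one _)

lemma aux_int_sin (s : ℝ) (hs : 0 < s) (t : ℝ) :
    Integrable (fun x : ℝ => x * Real.exp (-s * x ^ 2) * Real.sin (t * x)) := by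
  refine (integrable_mul_exp_neg_mul_sq hs).norm.mono' (by fun_prop)
    (Filter.Eventually.of_forall fun x => ?_)
  rw [norm_mul]
  exact mul_le_of_le_one_right (norm_nonneg _) (Real.abs_sin_le_one _)

lemma aux_cos_full (s : ℝ) (hs : 0 < s) (t : ℝ) :
    ∫ x : ℝ, Real.exp (-s * x ^ 2) * Real.cos (t * x)
      = Real.sqrt (Real.pi / s) * Real.exp (-t ^ 2 / (4 * s)) := by
  have h := fourierIntegral_gaussian (b := (s : ℂ)) (by simpa using hs) (t : ℂ)
  have e1 : ((Real.pi : ℂ) / s) ^ (1 / 2 : ℂ) = ((Real.sqrt (Real.pi / s) : ℝ) : ℂ) := by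
    rw [Real.sqrt_eq_rpow, Complex.ofReal_cpow (by positivity)]
    push_cast
    rfl
  have e2 : Complex.exp (-(t : ℂ) ^ 2 / (4 * s)) = ((Real.exp (-t ^ 2 / (4 * s)) : ℝ) : ℂ) := by
    push_cast; rfl
  rw [e1, e2, ← Complex.ofReal_mul] at h
  have hint : Integrable (fun x : ℝ => Complex.exp (Complex.I * t * x) * Complex.exp (-(s:ℂ) * x ^ 2)) := by
    have := integrable_cexp_quadratic (b := (s : ℂ)) (by simpa using hs) (Complex.I * t) 0
    refine this.congr (Filter.Eventually.of_forall fun x => ?_)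
    simp only [← Complex.exp_add]
    congr 1; ring
  have h2 := integral_re hint
  have h3 := congrArg Complex.re h
  rw [Complex.ofReal_re] at h3
  rw [← h3]
  refine Eq.trans ?_ h2
  refine integral_congr_ae (Filter.Eventually.of_forall fun x => ?_)
  have a1 : Complex.exp (-(s:ℂ) * x ^ 2) = ((Real.exp (-s * x ^ 2) : ℝ) : ℂ) := by push_cast; rfl
  have a2 : Complex.I * t * x = ((t * x : ℝ) : ℂ) * Complex.I := by push_cast; ring
  simp only [a1, a2]
  change _ = Complex.re _
  rw [Complex.re_mul_ofReal, Complex.exp_ofReal_mul_I_re]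
  ring

lemma aux_cos (s : ℝ) (hs : 0 < s) (t : ℝ) :
    ∫ x in Ioi (0:ℝ), Real.exp (-s * x ^ 2) * Real.cos (t * x)
      = Real.sqrt (Real.pi / s) / 2 * Real.exp (-t ^ 2 / (4 * s)) := by
  have h := integral_comp_abs (f := fun x : ℝ => Real.exp (-s * x ^ 2) * Real.cos (t * x))
  have e : ∀ x : ℝ, Real.cos (t * |x|) = Real.cos (t * x) := by
    intro x
    rcases abs_choice x with h | h <;> rw [h]
    rw [mul_neg, Real.cos_neg]
  simp only [sq_abs, e] at h
  rw [aux_cos_full s hs t] at h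
  linarith

lemma aux_sin (s : ℝ) (hs : 0 < s) (t : ℝ) :
    ∫ x in Ioi (0:ℝ), x * Real.exp (-s * x ^ 2) * Real.sin (t * x)
      = t / (2 * s) * (Real.sqrt (Real.pi / s) / 2 * Real.exp (-t ^ 2 / (4 * s))) := by
  have hi1 := ((aux_int_cos s hs t).integrableOn (s := Ioi 0)).const_mul t
  have hi2 := ((aux_int_sin s hs t).integrableOn (s := Ioi 0)).const_mul (2 * s)
  have hd : ∀ x ∈ Ici (0:ℝ), HasDerivAt (fun x : ℝ => Real.exp (-s * x ^ 2) * Real.sin (t * x))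
      (t * (Real.exp (-s * x ^ 2) * Real.cos (t * x)) -
        2 * s * (x * Real.exp (-s * x ^ 2) * Real.sin (t * x))) x := by
    intro x _
    have h1 := ((hasDerivAt_pow 2 x).const_mul (-s)).exp
    have h2 := ((hasDerivAt_id x).const_mul t).sin
    convert! h1.mul h2 using 1
    simp
    ring
  have hz : Filter.Tendsto (fun x : ℝ => Real.exp (-s * x ^ 2)) Filter.atTop (nhds 0) := by
    apply Real.tendsto_exp_atBot.comp
    exact (Filter.tendsto_pow_atTop two_ne_zero).const_mul_atTop_of_neg (by linarith)
  have ht : Filter.Tendsto (fun x : ℝ => Real.exp (-s * x ^ 2) * Real.sin (t * x))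
      Filter.atTop (nhds 0) := by
    refine squeeze_zero_norm (fun x => ?_) hz
    rw [norm_mul, Real.norm_eq_abs, Real.norm_eq_abs, Real.abs_exp]
    exact mul_le_of_le_one_right (Real.exp_pos _).le (Real.abs_sin_le_one _)
  have h := integral_Ioi_of_hasDerivAt_of_tendsto' hd (hi1.sub hi2) ht
  rw [integral_sub hi1 hi2, integral_const_mul, integral_const_mul, aux_cos s hs t] at h
  simp only [mul_zero, Real.sin_zero, sub_zero] at h
  rw [div_mul_eq_mul_div, eq_div_iff (by positivity)]
  linarith

/-- for `s > 0`, `a > 0`, `λ ∈ ℝ`,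
`4 ∫_0^∞ e^{−s(μ²+λ²)} sin(μa) (μ cos(μa) + |λ| sin(μa)) dμ
  = √π e^{−sλ²} (a s^{−3/2} e^{−a²/s} + |λ| s^{−1/2} (1 − e^{−a²/s}))`. -/
theorem stmt9 (s : ℝ) (hs : 0 < s) (a : ℝ) (ha : 0 < a) (lam : ℝ) :
    4 * ∫ μ in Ioi (0:ℝ), Real.exp (-s * (μ ^ 2 + lam ^ 2)) * Real.sin (μ * a) *
        (μ * Real.cos (μ * a) + |lam| * Real.sin (μ * a)) =
      Real.sqrt Real.pi * Real.exp (-s * lam ^ 2) *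
        (a * s ^ (-(3:ℝ) / 2) * Real.exp (-a ^ 2 / s) +
          |lam| * s ^ (-(1:ℝ) / 2) * (1 - Real.exp (-a ^ 2 / s))) := by
  have hi1 := ((aux_int_sin s hs (2 * a)).integrableOn (s := Ioi 0))
  have hi2 := ((aux_int_cos s hs 0).integrableOn (s := Ioi 0))
  have hi3 := ((aux_int_cos s hs (2 * a)).integrableOn (s := Ioi 0))
  have hf : ∀ μ : ℝ, Real.exp (-s * (μ ^ 2 + lam ^ 2)) * Real.sin (μ * a) *
        (μ * Real.cos (μ * a) + |lam| * Real.sin (μ * a)) =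
      (Real.exp (-s * lam ^ 2) / 2) * (μ * Real.exp (-s * μ ^ 2) * Real.sin (2 * a * μ) +
        |lam| * (Real.exp (-s * μ ^ 2) * Real.cos (0 * μ) -
          Real.exp (-s * μ ^ 2) * Real.cos (2 * a * μ))) := by
    intro μ
    have e1 : Real.exp (-s * (μ ^ 2 + lam ^ 2)) = Real.exp (-s * μ ^ 2) * Real.exp (-s * lam ^ 2) := by
      rw [← Real.exp_add]; congr 1; ring
    have e2 : 2 * a * μ = 2 * (μ * a) := by ring
    rw [e1, e2, Real.sin_two_mul, Real.cos_two_mul, zero_mul, Real.cos_zero, Real.cos_sq']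
    ring
  simp_rw [hf]
  have hi4 : IntegrableOn (fun x : ℝ => |lam| * (Real.exp (-s * x ^ 2) * Real.cos (0 * x) -
      Real.exp (-s * x ^ 2) * Real.cos (2 * a * x))) (Ioi 0) := (hi2.sub hi3).const_mul _
  rw [integral_const_mul, integral_add hi1 hi4, integral_const_mul,
    integral_sub hi2 hi3, aux_sin s hs, aux_cos s hs, aux_cos s hs]
  have e1 : s ^ (-(1:ℝ) / 2) = 1 / Real.sqrt s := by
    rw [neg_div, Real.rpow_neg hs.le, ← Real.sqrt_eq_rpow, one_div]
  have e3 : s ^ (-(3:ℝ) / 2) = 1 / Real.sqrt s / s := by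
    rw [← e1, show (-(3:ℝ) / 2) = -(1:ℝ) / 2 - 1 by norm_num, Real.rpow_sub_one hs.ne']
  have e4 : -(2 * a) ^ 2 / (4 * s) = -a ^ 2 / s := by field_simp; ring
  have e5 : -(0:ℝ) ^ 2 / (4 * s) = 0 := by simp
  have hq : Real.sqrt s ≠ 0 := (Real.sqrt_pos.2 hs).ne'
  rw [e1, e3, e4, e5, Real.exp_zero, Real.sqrt_div' _ hs.le]
  field_simp
  ring
end
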